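/- arXiv:2404.04599 — 2 statements merged into one kernel-verified Lean document; each statement's English description precedes it below -/
import Mathlib

section
/- Trace distance is preserved under discarding the B part of invariant ensembles (Corollary corollary-4241439): Let d, N ≥ 1 and let Dyes and Dno be Borel probability measures on the unit sphere of (Fin d × Fin d) → ℂ, each unitarily invariant on H_B. Define the density matrices ρ = ∫ (ψψ†)^{⊗N} dDyes(ψ) and σ = ∫ (ψψ†)^{⊗N} dDno(ψ) (Bochner integrals in the space of matrices indexed by (Fin N → Fin d × Fin d)). Then d_tr(ρ, σ) = d_tr(Tr_B ρ, Tr_B σ), where Tr_B denotes the partial trace over all N of the B registers. -/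
open scoped ComplexConjugate ComplexOrder Kronecker Matrix
open MeasureTheory

namespace PaperStmt

/-- The rank-one matrix `ψψ†` associated with a vector `ψ`. -/
noncomputable def outer {ι : Type*} (ψ : ι → ℂ) : Matrix ι ι ℂ :=
  Matrix.of fun x y => ψ x * conj (ψ y)

/-- The `N`-fold tensor power of a square matrix `ρ`. -/
noncomputable def tpow {ι : Type*} (ρ : Matrix ι ι ℂ) (N : ℕ) : Matrix (Fin N → ι) (Fin N → ι) ℂ :=
  Matrix.of fun x y => ∏ i, ρ (x i) (y i)

/-- `ψ` is a unit vector (for the ℓ² norm). -/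
def IsUnitVec {ι : Type*} [Fintype ι] (ψ : ι → ℂ) : Prop :=
  ∑ x, Complex.normSq (ψ x) = 1

/-- `0 ⊑ T ⊑ 1` in the Loewner order. -/
def IsTester {κ : Type*} [Fintype κ] [DecidableEq κ] (T : Matrix κ κ ℂ) : Prop :=
  T.PosSemidef ∧ ((1 : Matrix κ κ ℂ) - T).PosSemidef

/-- `ρ` is a density matrix: positive semidefinite with unit trace. -/
def IsDensity {ι : Type*} [Fintype ι] (ρ : Matrix ι ι ℂ) : Prop :=
  ρ.PosSemidef ∧ ρ.trace = 1

/-- The acceptance probability `tr (T · ρ^{⊗N})` of a tester `T` on `N` samples of `ρ`. -/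
noncomputable def acc {ι : Type*} [Fintype ι] {N : ℕ}
    (T : Matrix (Fin N → ι) (Fin N → ι) ℂ) (ρ : Matrix ι ι ℂ) : ℝ :=
  ((T * tpow ρ N).trace).re

/-- The trace distance `½ ∑ᵢ |λᵢ(ρ - σ)|` between (Hermitian) matrices. -/
noncomputable def traceDist {κ : Type*} [Fintype κ] [DecidableEq κ]
    (ρ σ : Matrix κ κ ℂ) : ℝ :=
  if h : (ρ - σ).IsHermitian then (1 / 2) * ∑ i, |h.eigenvalues i| else 0

/-- The local tester on `H_A` determined by a matrix `M` acting on Alice's registers. -/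
noncomputable def localA {d N : ℕ} (M : Matrix (Fin N → Fin d) (Fin N → Fin d) ℂ) :
    Matrix (Fin N → Fin d × Fin d) (Fin N → Fin d × Fin d) ℂ :=
  Matrix.of fun x y =>
    M (fun i => (x i).1) (fun i => (y i).1) *
      (if (fun i => (x i).2) = (fun i => (y i).2) then 1 else 0)

/-- The vector `(I ⊗ U) ψ` : the unitary `U` applied to the `B` part of `ψ`. -/
noncomputable def applyB {d : ℕ} (U : Matrix (Fin d) (Fin d) ℂ) (ψ : Fin d × Fin d → ℂ) :
    Fin d × Fin d → ℂ :=
  fun p => ∑ k, U p.2 k * ψ (p.1, k)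

/-- The partial trace over the second (`B`) tensor factor. -/
noncomputable def ptraceB {d : ℕ} (M : Matrix (Fin d × Fin d) (Fin d × Fin d) ℂ) :
    Matrix (Fin d) (Fin d) ℂ :=
  Matrix.of fun a b => ∑ j, M (a, j) (b, j)


/-- The partial trace over all `N` of the `B` registers. -/
noncomputable def ptraceBn {d N : ℕ}
    (M : Matrix (Fin N → Fin d × Fin d) (Fin N → Fin d × Fin d) ℂ) :
    Matrix (Fin N → Fin d) (Fin N → Fin d) ℂ :=
  Matrix.of fun x y => ∑ b : Fin N → Fin d, M (fun i => (x i, b i)) (fun i => (y i, b i))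

/-!
Let `X` be the difference of the two states, regarded as a matrix on `α × α` with
`α = Fin N → Fin d`. It is supported on the vectors fixed by the symmetric group and commutes with
every `1 ⊗ U^{⊗N}`, `U` unitary. The tensor powers `U^{⊗N}` span the permutation-invariant
matrices: a polynomial vanishing on unitaries vanishes on all matrices, and polarization recovers
the symmetrized tensor products from the powers `A^{⊗N}`. Hence `X` commutes with `1 ⊗ G` for every
invariant `G`.

Every fixed vector is of the form `vec G = (1 ⊗ G) vec 1` with `G` invariant, so `X` is determined
by `X vec 1 = vec Yᵀ = (Y ⊗ 1) vec 1`. This gives `X = (Y ⊗ 1) P`, where `P` is the symmetrizer, and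
`Y ⊗ 1` commutes with `P`. Then `|X| = (|Y| ⊗ 1) P` and `|Tr_B X| = |Y| Tr_B P`, and these have
the same trace.
-/

section TraceNorm

open scoped MatrixOrder

variable {κ α β : Type*} [Fintype κ] [DecidableEq κ] [Fintype α] [DecidableEq α] [Fintype β]
  [DecidableEq β]

/-- The trace norm `tr |M|`, where `|M| = √(MᴴM)`. -/
noncomputable def traceNorm (M : Matrix κ κ ℂ) : ℝ :=
  (CFC.abs M).trace.re

lemma traceNorm_eq_of_mul_self_eq {M K : Matrix κ κ ℂ} (hK : K.PosSemidef)
    (h : K * K = Mᴴ * M) : traceNorm M = K.trace.re := by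
  rw [traceNorm, CFC.abs, Matrix.star_eq_conjTranspose, CFC.sqrt_unique h hK.nonneg]

lemma sum_abs_eigenvalues_eq_traceNorm {M : Matrix κ κ ℂ} (hM : M.IsHermitian) :
    ∑ i, |hM.eigenvalues i| = traceNorm M := by
  have h_abs : CFC.abs M = hM.cfc (‖·‖) := by
    rw [CFC.abs_eq_cfc_norm M hM, hM.cfc_eq]
  rw [traceNorm, h_abs, Matrix.IsHermitian.cfc, Unitary.conjStarAlgAut_apply,
    Matrix.trace_mul_comm, ← mul_assoc]
  simp

lemma traceDist_eq_traceNorm_sub {ρ σ : Matrix κ κ ℂ} (h : (ρ - σ).IsHermitian) :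
    traceDist ρ σ = 1 / 2 * traceNorm (ρ - σ) := by
  rw [traceDist, dif_pos h, sum_abs_eigenvalues_eq_traceNorm]

lemma posSemidef_abs (M : Matrix κ κ ℂ) : (CFC.abs M).PosSemidef :=
  Matrix.nonneg_iff_posSemidef.mp (CFC.abs_nonneg M)

lemma abs_mul_abs_eq_conjTranspose_mul (M : Matrix κ κ ℂ) : CFC.abs M * CFC.abs M = Mᴴ * M :=
  CFC.abs_mul_abs M

lemma traceNorm_submatrix_equiv (M : Matrix α α ℂ) (e : κ ≃ α) :
    traceNorm (M.submatrix e e) = traceNorm M := by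
  have h_sq : (CFC.abs M).submatrix e e * (CFC.abs M).submatrix e e =
      (M.submatrix e e)ᴴ * M.submatrix e e := by
    rw [Matrix.conjTranspose_submatrix, Matrix.submatrix_mul_equiv, Matrix.submatrix_mul_equiv,
      abs_mul_abs_eq_conjTranspose_mul]
  rw [traceNorm_eq_of_mul_self_eq ((posSemidef_abs M).submatrix e) h_sq, traceNorm]
  exact congrArg _ (Equiv.sum_comp e fun a => CFC.abs M a a)

open scoped Matrix.Norms.L2Operator in
lemma posSemidef_mul_of_commute {κ : Type*} [Fintype κ] {M Q : Matrix κ κ ℂ} (hM : M.PosSemidef)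
    (hQ : Q.PosSemidef) (h : Commute M Q) : (M * Q).PosSemidef := by
  classical exact Matrix.nonneg_iff_posSemidef.mp (h.mul_nonneg hM.nonneg hQ.nonneg)

lemma traceNorm_mul_of_commute {M Q : Matrix κ κ ℂ} (hQ : Q.PosSemidef) (h : Commute M Q) :
    traceNorm (M * Q) = (CFC.abs M * Q).trace.re := by
  have hQ_star : star Q = Q := hQ.isHermitian
  have h_star : Commute Q (star M) := by simpa only [hQ_star] using (commute_star_star.mpr h).symm
  have h_abs : Commute Q (CFC.abs M) := (h.cfcAbs_left (by rwa [hQ_star])).symm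
  refine traceNorm_eq_of_mul_self_eq (posSemidef_mul_of_commute (posSemidef_abs M) hQ h_abs.symm) ?_
  calc CFC.abs M * Q * (CFC.abs M * Q)
      = Mᴴ * M * (Q * Q) := by
        rw [h_abs.mul_mul_mul_comm, abs_mul_abs_eq_conjTranspose_mul]
    _ = Mᴴ * Q * (M * Q) := h.mul_mul_mul_comm _ _
    _ = (M * Q)ᴴ * (M * Q) := by
        rw [Matrix.conjTranspose_mul, hQ.isHermitian.eq, ← Matrix.star_eq_conjTranspose, h_star.eq]

lemma abs_kronecker_one (Y : Matrix α α ℂ) :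
    CFC.abs (Y ⊗ₖ (1 : Matrix β β ℂ)) = CFC.abs Y ⊗ₖ (1 : Matrix β β ℂ) := by
  refine CFC.sqrt_unique ?_ ((posSemidef_abs Y).kronecker .one).nonneg
  rw [← Matrix.mul_kronecker_mul, abs_mul_abs_eq_conjTranspose_mul, Matrix.star_eq_conjTranspose,
    Matrix.conjTranspose_kronecker, Matrix.conjTranspose_one, ← Matrix.mul_kronecker_mul]

end TraceNorm

section PartialTrace

/-- The partial trace over the second factor of a matrix indexed by a product. -/
noncomputable def partialTrace {α β : Type*} [Fintype β] (M : Matrix (α × β) (α × β) ℂ) :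
    Matrix α α ℂ :=
  Matrix.of fun a c => ∑ b, M (a, b) (c, b)

variable {α β : Type*} [Fintype β]

lemma partialTrace_eq_sum_submatrix (M : Matrix (α × β) (α × β) ℂ) :
    partialTrace M = ∑ b, M.submatrix (·, b) (·, b) := by
  ext a c
  simp [partialTrace, Matrix.sum_apply]

lemma posSemidef_partialTrace {M : Matrix (α × β) (α × β) ℂ} (hM : M.PosSemidef) :
    (partialTrace M).PosSemidef := by
  rw [partialTrace_eq_sum_submatrix]
  exact Matrix.posSemidef_sum _ fun b _ => hM.submatrix _

lemma isHermitian_partialTrace {M : Matrix (α × β) (α × β) ℂ} (hM : M.IsHermitian) :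
    (partialTrace M).IsHermitian := by
  rw [partialTrace_eq_sum_submatrix, Matrix.IsHermitian, Matrix.conjTranspose_sum]
  exact Finset.sum_congr rfl fun b _ => (hM.submatrix _).eq

variable [Fintype α]

lemma trace_partialTrace (M : Matrix (α × β) (α × β) ℂ) : (partialTrace M).trace = M.trace := by
  simp [partialTrace, Matrix.trace, Fintype.sum_prod_type]

variable [DecidableEq β] (Y : Matrix α α ℂ) (M : Matrix (α × β) (α × β) ℂ)

lemma partialTrace_kronecker_one_mul :
    partialTrace ((Y ⊗ₖ (1 : Matrix β β ℂ)) * M) = Y * partialTrace M := by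
  ext a c
  simp only [partialTrace, Matrix.of_apply, Matrix.mul_apply, Matrix.kroneckerMap_apply,
    Matrix.one_apply, Fintype.sum_prod_type, Finset.mul_sum, mul_ite, mul_one, mul_zero, ite_mul,
    zero_mul, Finset.sum_ite_eq, Finset.mem_univ, if_true]
  exact Finset.sum_comm

lemma partialTrace_mul_kronecker_one :
    partialTrace (M * (Y ⊗ₖ (1 : Matrix β β ℂ))) = partialTrace M * Y := by
  ext a c
  simp only [partialTrace, Matrix.of_apply, Matrix.mul_apply, Matrix.kroneckerMap_apply,
    Matrix.one_apply, Fintype.sum_prod_type, Finset.sum_mul, mul_ite, mul_one, mul_zero,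
    Finset.sum_ite_eq', Finset.mem_univ, if_true]
  exact Finset.sum_comm

variable [DecidableEq α] {Y M}

open scoped MatrixOrder

theorem traceNorm_partialTrace_kronecker_one_mul
    (hM : M.PosSemidef) (h : Commute (Y ⊗ₖ (1 : Matrix β β ℂ)) M) :
    traceNorm (partialTrace ((Y ⊗ₖ 1) * M)) = traceNorm ((Y ⊗ₖ 1) * M) := by
  have h_partial : Commute Y (partialTrace M) := by
    rw [Commute, SemiconjBy, ← partialTrace_kronecker_one_mul, h.eq,
      partialTrace_mul_kronecker_one]
  calc traceNorm (partialTrace ((Y ⊗ₖ 1) * M))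
      = (CFC.abs Y * partialTrace M).trace.re := by
        rw [partialTrace_kronecker_one_mul,
          traceNorm_mul_of_commute (posSemidef_partialTrace hM) h_partial]
    _ = (CFC.abs (Y ⊗ₖ (1 : Matrix β β ℂ)) * M).trace.re := by
        rw [abs_kronecker_one, ← partialTrace_kronecker_one_mul, trace_partialTrace]
    _ = traceNorm ((Y ⊗ₖ 1) * M) := (traceNorm_mul_of_commute hM h).symm

end PartialTrace

section Symmetrizer

variable (S α : Type*) [Group S] [Fintype α] [DecidableEq α] [MulAction S α]

/-- The permutation representation of a group action, as a homomorphism into matrices. -/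
noncomputable def actionMatrix : S →* Matrix α α ℂ :=
  Matrix.permMatrixHom.comp (MulAction.toPermHom S α)

/-- The symmetrizer `|S|⁻¹ ∑ₛ π(s)`, i.e. the orthogonal projection onto the vectors fixed by the
permutation representation `π`. -/
noncomputable def symmetrizer [Fintype S] : Matrix α α ℂ :=
  (Fintype.card S : ℂ)⁻¹ • ∑ s : S, actionMatrix S α s

variable {S α}

lemma actionMatrix_mulVec (s : S) (v : α → ℂ) :
    actionMatrix S α s *ᵥ v = fun a => v (s⁻¹ • a) :=
  Matrix.permMatrix_mulVec _

lemma actionMatrix_mul_apply {β : Type*} (s : S) (M : Matrix α β ℂ) (a : α) (b : β) :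
    (actionMatrix S α s * M) a b = M (s⁻¹ • a) b :=
  congrFun (actionMatrix_mulVec s (M · b)) a

lemma mul_actionMatrix_apply {β : Type*} (s : S) (M : Matrix β α ℂ) (b : β) (a : α) :
    (M * actionMatrix S α s) b a = M b (s • a) :=
  congrFun (Matrix.vecMul_permMatrix (v := M b) _) a

lemma commute_actionMatrix_iff {s : S} {M : Matrix α α ℂ} :
    Commute (actionMatrix S α s) M ↔ ∀ a b, M (s • a) (s • b) = M a b := by
  rw [Commute, SemiconjBy, ← Matrix.ext_iff, (MulAction.surjective s).forall]
  simp only [actionMatrix_mul_apply, mul_actionMatrix_apply, inv_smul_smul]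
  exact forall₂_congr fun _ _ => eq_comm

lemma conjTranspose_actionMatrix (s : S) :
    (actionMatrix S α s)ᴴ = actionMatrix S α s⁻¹ := by
  simp only [actionMatrix, MonoidHom.comp_apply, map_inv (MulAction.toPermHom S α),
    Matrix.permMatrixHom_apply, Matrix.conjTranspose_permMatrix]

lemma commute_actionMatrix_of_mulVec_vec {s : S} {G : Matrix α α ℂ}
    (h : actionMatrix S (α × α) s *ᵥ G.vec = G.vec) : Commute (actionMatrix S α s) G := by
  refine commute_actionMatrix_iff.mpr fun a b => ?_
  have := congrFun h (s • b, s • a)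
  simpa [actionMatrix_mulVec] using this.symm

lemma commute_actionMatrix_kronecker_one {s : S} {Y : Matrix α α ℂ} {β : Type*}
    [Fintype β] [DecidableEq β] [MulAction S β] (h : Commute (actionMatrix S α s) Y) :
    Commute (actionMatrix S (α × β) s) (Y ⊗ₖ 1) := by
  rw [commute_actionMatrix_iff] at h ⊢
  rintro ⟨a, b⟩ ⟨c, e⟩
  simp [h, Matrix.one_apply]

variable [Fintype S]

lemma isHermitian_symmetrizer : (symmetrizer S α).IsHermitian := by
  simp only [Matrix.IsHermitian, symmetrizer, Matrix.conjTranspose_smul, Matrix.conjTranspose_sum,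
    conjTranspose_actionMatrix, star_inv₀, star_natCast]
  exact congrArg _ (Equiv.sum_comp (Equiv.inv S) (actionMatrix S α))

lemma actionMatrix_mul_symmetrizer (s : S) :
    actionMatrix S α s * symmetrizer S α = symmetrizer S α := by
  simp only [symmetrizer, Matrix.mul_smul, Finset.mul_sum, ← map_mul]
  exact congrArg _ (Equiv.sum_comp (Equiv.mulLeft s) (actionMatrix S α))

lemma symmetrizer_mul_eq_self {β : Type*} {M : Matrix α β ℂ}
    (h : ∀ s : S, actionMatrix S α s * M = M) : symmetrizer S α * M = M := by
  simp only [symmetrizer, Matrix.smul_mul, Matrix.sum_mul, h, Finset.sum_const, Finset.card_univ,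
    ← Nat.cast_smul_eq_nsmul ℂ]
  exact inv_smul_smul₀ (Nat.cast_ne_zero.mpr Fintype.card_ne_zero) M

lemma symmetrizer_mul_self : symmetrizer S α * symmetrizer S α = symmetrizer S α :=
  symmetrizer_mul_eq_self actionMatrix_mul_symmetrizer

lemma posSemidef_symmetrizer : (symmetrizer S α).PosSemidef := by
  rw [← symmetrizer_mul_self]
  nth_rewrite 1 [← isHermitian_symmetrizer.eq]
  exact Matrix.posSemidef_conjTranspose_mul_self _

lemma commute_symmetrizer {M : Matrix α α ℂ} (h : ∀ s : S, Commute (actionMatrix S α s) M) :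
    Commute (symmetrizer S α) M :=
  (Commute.sum_left _ _ _ fun s _ => h s).smul_left _

theorem eq_kronecker_one_mul_symmetrizer {X : Matrix (α × α) (α × α) ℂ} {Y : Matrix α α ℂ}
    (hX : X * symmetrizer S (α × α) = X)
    (hcomm : ∀ G, (∀ s : S, Commute (actionMatrix S α s) G) → Commute X (1 ⊗ₖ G))
    (hY : X *ᵥ Matrix.vec 1 = Yᵀ.vec) :
    X = (Y ⊗ₖ 1) * symmetrizer S (α × α) := by
  suffices h : ∀ v, X *ᵥ (symmetrizer S (α × α) *ᵥ v) =
      (Y ⊗ₖ 1) *ᵥ (symmetrizer S (α × α) *ᵥ v) by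
    rw [← hX]
    refine Matrix.mulVec_injective (funext fun v => ?_)
    simpa only [Matrix.mulVec_mulVec] using h v
  intro v
  obtain ⟨G, hG⟩ := Matrix.vec_bijective.surjective (symmetrizer S (α × α) *ᵥ v)
  have hG_inv (s : S) : Commute (actionMatrix S α s) G := by
    refine commute_actionMatrix_of_mulVec_vec ?_
    rw [hG, Matrix.mulVec_mulVec, actionMatrix_mul_symmetrizer]
  have hG_vec : (1 ⊗ₖ G) *ᵥ Matrix.vec (1 : Matrix α α ℂ) = G.vec := by
    simp [Matrix.kronecker_mulVec_vec]
  rw [← hG]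
  calc X *ᵥ G.vec = (1 ⊗ₖ G) *ᵥ (X *ᵥ Matrix.vec 1) := by
        rw [← hG_vec, Matrix.mulVec_mulVec, (hcomm G hG_inv).eq, Matrix.mulVec_mulVec]
    _ = (Y ⊗ₖ 1) *ᵥ G.vec := by simp [hY, Matrix.kronecker_mulVec_vec]

theorem exists_eq_kronecker_one_mul_symmetrizer {X : Matrix (α × α) (α × α) ℂ}
    (hleft : symmetrizer S (α × α) * X = X)
    (hright : X * symmetrizer S (α × α) = X)
    (hcomm : ∀ G, (∀ s : S, Commute (actionMatrix S α s) G) → Commute X (1 ⊗ₖ G)) :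
    ∃ Y : Matrix α α ℂ, X = (Y ⊗ₖ 1) * symmetrizer S (α × α) ∧
      Commute (Y ⊗ₖ 1) (symmetrizer S (α × α)) := by
  obtain ⟨Z, hZ⟩ := Matrix.vec_bijective.surjective (X *ᵥ Matrix.vec 1)
  refine ⟨Zᵀ, eq_kronecker_one_mul_symmetrizer hright hcomm ?_, ?_⟩
  · rw [Matrix.transpose_transpose, hZ]
  · refine (commute_symmetrizer fun s => commute_actionMatrix_kronecker_one ?_).symm
    have hZ_comm : Commute (actionMatrix S α s) Z := by
      refine commute_actionMatrix_of_mulVec_vec ?_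
      rw [hZ, Matrix.mulVec_mulVec, ← hleft, ← mul_assoc, actionMatrix_mul_symmetrizer]
    rw [commute_actionMatrix_iff] at hZ_comm ⊢
    exact fun a b => hZ_comm b a

theorem traceNorm_partialTrace_eq_of_symmetric {X : Matrix (α × α) (α × α) ℂ}
    (hleft : symmetrizer S (α × α) * X = X) (hright : X * symmetrizer S (α × α) = X)
    (hcomm : ∀ G, (∀ s : S, Commute (actionMatrix S α s) G) → Commute X (1 ⊗ₖ G)) :
    traceNorm (partialTrace X) = traceNorm X := by
  obtain ⟨Y, hXY, hY⟩ := exists_eq_kronecker_one_mul_symmetrizer hleft hright hcomm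
  rw [hXY, traceNorm_partialTrace_kronecker_one_mul posSemidef_symmetrizer hY]

end Symmetrizer

section Polarization

lemma surjective_of_sum_single_eq {n κ : Type*} [Fintype n] [Fintype κ] {g : n → κ}
    (h : ∑ i, Finsupp.single (g i) 1 = ∑ k, Finsupp.single k 1) : Function.Surjective g := by
  classical
  intro k
  by_contra! hk
  have := DFunLike.congr_fun h k
  simp [Finsupp.finsetSum_apply, Finsupp.single_apply, hk] at this

variable {K E F n κ : Type*} [Field K] [AddCommGroup E] [Module K E] [AddCommGroup F] [Module K F]
  [Fintype κ]

section DiagonalPolynomial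

variable [Fintype n] [DecidableEq n] (f : MultilinearMap K (fun _ : n => E) F)

/-- The polynomial in the coefficients `z` whose value is `φ (f (x, …, x))` at `x = ∑ k, z k • v k`,
for a multilinear map `f` and a linear form `φ`. -/
noncomputable def diagonalPolynomial (φ : Module.Dual K F) (v : κ → E) : MvPolynomial κ K :=
  ∑ g : n → κ, MvPolynomial.monomial (∑ i, Finsupp.single (g i) 1) (φ (f fun i => v (g i)))

lemma eval_diagonalPolynomial (φ : Module.Dual K F) (v : κ → E) (z : κ → K) :
    (diagonalPolynomial f φ v).eval z = φ (f fun _ => ∑ k, z k • v k) := by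
  simp only [diagonalPolynomial, MvPolynomial.monomial_sum_index, f.map_sum, f.map_smul_univ,
    map_sum, map_mul, map_prod, map_smul, smul_eq_mul]
  simp [mul_comm, MvPolynomial.eval_monomial]

lemma coeff_diagonalPolynomial (φ : Module.Dual K F) (v : n → E) :
    (diagonalPolynomial f φ v).coeff (∑ i, Finsupp.single i 1) =
      φ (∑ π : Equiv.Perm n, f fun i => v (π i)) := by
  simp only [diagonalPolynomial, MvPolynomial.coeff_sum, MvPolynomial.coeff_monomial, map_sum]
  refine (Fintype.sum_of_injective (fun π : Equiv.Perm n => ⇑π) DFunLike.coe_injective _ _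
    (fun g hg => if_neg fun h => hg ?_) fun π => ?_).symm
  · have hg_bij := Finite.surjective_iff_bijective.mp (surjective_of_sum_single_eq h)
    exact ⟨Equiv.ofBijective g hg_bij, rfl⟩
  · rw [if_pos (Equiv.sum_comp π fun i => Finsupp.single i 1)]

variable {f} {W : Submodule K F}

lemma diagonalPolynomial_eq_zero {s : κ → Set K} (hs : ∀ k, (s k).Infinite) {v : κ → E}
    (h : ∀ z ∈ Set.univ.pi s, f (fun _ => ∑ k, z k • v k) ∈ W) {φ : Module.Dual K F}
    (hφ : φ ∈ W.dualAnnihilator) : diagonalPolynomial f φ v = 0 := by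
  refine MvPolynomial.funext_set s hs fun z hz => ?_
  rw [eval_diagonalPolynomial, map_zero]
  exact (Submodule.mem_dualAnnihilator φ).mp hφ _ (h z hz)

theorem sum_perm_mem_of_forall_const_mem [Infinite K] (h : ∀ x, f (fun _ => x) ∈ W) (v : n → E) :
    ∑ π : Equiv.Perm n, f (fun i => v (π i)) ∈ W := by
  refine (Subspace.forall_mem_dualAnnihilator_apply_eq_zero_iff W _).mp fun φ hφ => ?_
  have h_zero : diagonalPolynomial f φ v = 0 :=
    diagonalPolynomial_eq_zero (fun _ => Set.infinite_univ) (fun _ _ => h _) hφ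
  rw [← coeff_diagonalPolynomial, h_zero, MvPolynomial.coeff_zero]

end DiagonalPolynomial

theorem map_sum_smul_mem_of_infinite [Finite n] {f : MultilinearMap K (fun _ : n => E) F}
    {W : Submodule K F} {s : κ → Set K} (hs : ∀ k, (s k).Infinite) {v : κ → E}
    (h : ∀ z ∈ Set.univ.pi s, f (fun _ => ∑ k, z k • v k) ∈ W) (z : κ → K) :
    f (fun _ => ∑ k, z k • v k) ∈ W := by
  classical
  have := Fintype.ofFinite n
  refine (Subspace.forall_mem_dualAnnihilator_apply_eq_zero_iff W _).mp fun φ hφ => ?_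
  rw [← eval_diagonalPolynomial, diagonalPolynomial_eq_zero hs h hφ, map_zero]

end Polarization

section TensorPower

lemma infinite_sphere_complex : (Metric.sphere (0 : ℂ) 1).Infinite := by
  refine (isPreconnected_sphere (by simp [Complex.rank_real_complex]) 0 1).infinite_of_nontrivial ?_
  exact ⟨1, by simp, -1, by simp, by norm_num⟩

variable {ι : Type*} {N : ℕ}

lemma tpow_apply (A : Matrix ι ι ℂ) (x y : Fin N → ι) : tpow A N x y = ∏ i, A (x i) (y i) :=
  rfl

variable (ι N) in
/-- The tensor product of `N` matrices, as a multilinear map. -/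
noncomputable def tensorMap :
    MultilinearMap ℂ (fun _ : Fin N => Matrix ι ι ℂ) (Matrix (Fin N → ι) (Fin N → ι) ℂ) :=
  (Matrix.ofLinearEquiv ℂ).toLinearMap.compMultilinearMap <|
    MultilinearMap.pi fun x => MultilinearMap.pi fun y =>
      (MultilinearMap.mkPiAlgebra ℂ (Fin N) ℂ).compLinearMap
        fun i => Matrix.entryLinearMap ℂ ℂ (x i) (y i)

lemma tensorMap_apply (M : Fin N → Matrix ι ι ℂ) (x y : Fin N → ι) :
    tensorMap ι N M x y = ∏ i, M i (x i) (y i) := by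
  simp [tensorMap]

lemma tensorMap_const (A : Matrix ι ι ℂ) : tensorMap ι N (fun _ => A) = tpow A N := by
  ext x y
  rw [tensorMap_apply, tpow_apply]

lemma tensorMap_single [DecidableEq ι] (x y : Fin N → ι) :
    tensorMap ι N (fun i => Matrix.single (x i) (y i) 1) = Matrix.single x y 1 := by
  ext u v
  rw [tensorMap_apply]
  simp [Matrix.single_apply, Finset.prod_ite_zero, funext_iff, forall_and]

variable [Fintype ι] [DecidableEq ι] {W : Submodule ℂ (Matrix (Fin N → ι) (Fin N → ι) ℂ)}

lemma sum_smul_conj_single (V : Matrix ι ι ℂ) (z : ι → ℂ) :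
    ∑ k, z k • (V * Matrix.single k k 1 * star V) = V * Matrix.diagonal z * star V := by
  rw [← Matrix.sum_single_eq_diagonal, Finset.mul_sum, Finset.sum_mul]
  exact Finset.sum_congr rfl fun k _ => by
    rw [← smul_mul_assoc, ← mul_smul_comm, Matrix.smul_single, smul_eq_mul, mul_one]

lemma diagonal_mem_unitaryGroup {z : ι → ℂ} (hz : ∀ k, ‖z k‖ = 1) :
    Matrix.diagonal z ∈ Matrix.unitaryGroup ι ℂ := by
  rw [Matrix.mem_unitaryGroup_iff, Matrix.star_eq_conjTranspose, Matrix.diagonal_conjTranspose,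
    Matrix.diagonal_mul_diagonal, ← Matrix.diagonal_one]
  congr 1
  ext k
  simp [Complex.mul_conj', hz]

lemma tpow_mem_of_isHermitian (hW : ∀ U ∈ Matrix.unitaryGroup ι ℂ, tpow U N ∈ W)
    {A : Matrix ι ι ℂ} (hA : A.IsHermitian) : tpow A N ∈ W := by
  let V : Matrix ι ι ℂ := hA.eigenvectorUnitary
  have hA_eq : A = ∑ k, (hA.eigenvalues k : ℂ) • (V * Matrix.single k k 1 * star V) := by
    rw [sum_smul_conj_single]
    exact hA.spectral_theorem
  rw [hA_eq, ← tensorMap_const]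
  refine map_sum_smul_mem_of_infinite (fun _ => infinite_sphere_complex) (fun z hz => ?_) _
  rw [tensorMap_const, sum_smul_conj_single]
  refine hW _ (mul_mem (mul_mem (SetLike.coe_mem _) (diagonal_mem_unitaryGroup fun k => ?_))
    (Unitary.star_mem (SetLike.coe_mem _)))
  simpa using hz k trivial

lemma tpow_mem_of_forall_unitary (hW : ∀ U ∈ Matrix.unitaryGroup ι ℂ, tpow U N ∈ W)
    (A : Matrix ι ι ℂ) : tpow A N ∈ W := by
  let v : Bool → Matrix ι ι ℂ := fun b => if b then realPart A else imaginaryPart A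
  have hv (b) : IsSelfAdjoint (v b) := by cases b <;> exact Subtype.property _
  have hA_eq : A = ∑ b, (if b then 1 else Complex.I) • v b := by
    simp [v, realPart_add_I_smul_imaginaryPart]
  rw [hA_eq, ← tensorMap_const]
  refine map_sum_smul_mem_of_infinite
    (fun _ => Set.infinite_range_of_injective Complex.ofReal_injective) (fun z hz => ?_) _
  rw [tensorMap_const]
  refine tpow_mem_of_isHermitian hW (isSelfAdjoint_sum _ fun b _ => ?_)
  obtain ⟨t, ht⟩ := hz b trivial
  rw [← ht]
  exact IsSelfAdjoint.smul (by simp [isSelfAdjoint_iff]) (hv b)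

lemma sum_perm_single_mem_of_forall_unitary (hW : ∀ U ∈ Matrix.unitaryGroup ι ℂ, tpow U N ∈ W)
    (x y : Fin N → ι) :
    ∑ π : Equiv.Perm (Fin N), Matrix.single (x ∘ π) (y ∘ π) (1 : ℂ) ∈ W := by
  simp only [← tensorMap_single]
  refine sum_perm_mem_of_forall_const_mem (fun A => ?_) fun i => Matrix.single (x i) (y i) 1
  rw [tensorMap_const]
  exact tpow_mem_of_forall_unitary hW A

lemma eq_sum_smul_single_comp_perm {G : Matrix (Fin N → ι) (Fin N → ι) ℂ}
    {π : Equiv.Perm (Fin N)} (hG : ∀ x y, G (x ∘ π) (y ∘ π) = G x y) :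
    G = ∑ x, ∑ y, G x y • Matrix.single (x ∘ π) (y ∘ π) (1 : ℂ) := by
  let e : (Fin N → ι) ≃ (Fin N → ι) := π.symm.arrowCongr (Equiv.refl ι)
  calc G = ∑ x, ∑ y, G (e x) (e y) • Matrix.single (e x) (e y) (1 : ℂ) := by
        rw [Equiv.sum_comp e fun x => ∑ y, G x (e y) • Matrix.single x (e y) (1 : ℂ)]
        conv_lhs => rw [Matrix.matrix_eq_sum_single G]
        refine Finset.sum_congr rfl fun x _ => ?_
        rw [Equiv.sum_comp e fun y => G x y • Matrix.single x y (1 : ℂ)]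
        simp only [Matrix.smul_single, smul_eq_mul, mul_one]
    _ = ∑ x, ∑ y, G x y • Matrix.single (x ∘ π) (y ∘ π) (1 : ℂ) :=
        Fintype.sum_congr _ _ fun x => Fintype.sum_congr _ _ fun y =>
          congrArg (· • _) (hG x y)

theorem mem_span_tpow_unitary_of_perm_invariant {G : Matrix (Fin N → ι) (Fin N → ι) ℂ}
    (hG : ∀ (π : Equiv.Perm (Fin N)) x y, G (x ∘ π) (y ∘ π) = G x y) :
    G ∈ Submodule.span ℂ ((tpow · N) '' (Matrix.unitaryGroup ι ℂ : Set (Matrix ι ι ℂ))) := by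
  set W := Submodule.span ℂ ((tpow · N) '' (Matrix.unitaryGroup ι ℂ : Set (Matrix ι ι ℂ)))
  have hW : ∀ U ∈ Matrix.unitaryGroup ι ℂ, tpow U N ∈ W :=
    fun U hU => Submodule.subset_span ⟨U, hU, rfl⟩
  have h_card : (Fintype.card (Equiv.Perm (Fin N)) : ℂ) • G =
      ∑ x, ∑ y, G x y • ∑ π : Equiv.Perm (Fin N), Matrix.single (x ∘ π) (y ∘ π) (1 : ℂ) :=
    calc (Fintype.card (Equiv.Perm (Fin N)) : ℂ) • G
        = ∑ π : Equiv.Perm (Fin N), ∑ x, ∑ y, G x y • Matrix.single (x ∘ π) (y ∘ π) (1 : ℂ) := by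
          simp only [← eq_sum_smul_single_comp_perm (hG _), Finset.sum_const, Finset.card_univ,
            Nat.cast_smul_eq_nsmul]
      _ = _ := by
          rw [Finset.sum_comm]
          refine Finset.sum_congr rfl fun x _ => ?_
          rw [Finset.sum_comm]
          simp only [Finset.smul_sum]
  have h_ne : (Fintype.card (Equiv.Perm (Fin N)) : ℂ) ≠ 0 :=
    Nat.cast_ne_zero.mpr Fintype.card_ne_zero
  rw [← W.smul_mem_iff h_ne, h_card]
  exact W.sum_mem fun x _ => W.sum_mem fun y _ =>
    W.smul_mem _ (sum_perm_single_mem_of_forall_unitary hW x y)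

end TensorPower

section TensorPowerAlgebra

variable {ι κ : Type*} {N : ℕ}

lemma tpow_conjTranspose (A : Matrix ι ι ℂ) : tpow Aᴴ N = (tpow A N)ᴴ := by
  ext x y
  simp [tpow_apply]

lemma tpow_mul [Fintype ι] (A B : Matrix ι ι ℂ) : tpow (A * B) N = tpow A N * tpow B N := by
  ext x y
  simp only [tpow_apply, Matrix.mul_apply, Finset.prod_univ_sum, Fintype.piFinset_univ,
    Finset.prod_mul_distrib]

lemma tpow_one [DecidableEq ι] : tpow (1 : Matrix ι ι ℂ) N = 1 := by
  ext x y
  simp [tpow_apply, Matrix.one_apply, Finset.prod_ite_zero, funext_iff]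

variable (ι κ N) in
/-- Regroups `N` pairs of registers as a pair of `N`-fold registers: matrices indexed by
`Fin N → ι × κ`, such as `tpow (A ⊗ₖ B) N`, become matrices on a bipartite system. -/
def pairEquiv : (Fin N → ι) × (Fin N → κ) ≃ (Fin N → ι × κ) :=
  (Equiv.arrowProdEquivProdArrow (Fin N) (fun _ => ι) fun _ => κ).symm

lemma submatrix_pairEquiv_tpow_kronecker (A : Matrix ι ι ℂ) (B : Matrix κ κ ℂ) :
    (tpow (A ⊗ₖ B) N).submatrix (pairEquiv ι κ N) (pairEquiv ι κ N) = tpow A N ⊗ₖ tpow B N := by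
  ext ⟨a, b⟩ ⟨a', b'⟩
  simp [pairEquiv, tpow_apply, Finset.prod_mul_distrib]

lemma commute_one_kronecker_of_perm_invariant {α : Type*} [Fintype α] [DecidableEq α] [Fintype ι]
    [DecidableEq ι] {X : Matrix (α × (Fin N → ι)) (α × (Fin N → ι)) ℂ}
    (hX : ∀ U ∈ Matrix.unitaryGroup ι ℂ, Commute X (1 ⊗ₖ tpow U N))
    {G : Matrix (Fin N → ι) (Fin N → ι) ℂ}
    (hG : ∀ (π : Equiv.Perm (Fin N)) x y, G (x ∘ π) (y ∘ π) = G x y) :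
    Commute X (1 ⊗ₖ G) := by
  have hG_mem := mem_span_tpow_unitary_of_perm_invariant hG
  clear hG
  induction hG_mem using Submodule.span_induction with
  | mem M hM =>
    obtain ⟨U, hU, rfl⟩ := hM
    exact hX U hU
  | zero => rw [Matrix.kronecker_zero]; exact Commute.zero_right X
  | add M M' _ _ hM hM' => rw [Matrix.kronecker_add]; exact hM.add_right hM'
  | smul c M _ hM => rw [Matrix.kronecker_smul]; exact hM.smul_right c

end TensorPowerAlgebra

section Moments

variable {ι : Type*} {N : ℕ}

/-- The `N`-th moment matrix `∫ (ψψ†)^{⊗N} dD(ψ)`, with the integral taken entrywise. -/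
noncomputable def momentMatrix (D : Measure (ι → ℂ)) (N : ℕ) :
    Matrix (Fin N → ι) (Fin N → ι) ℂ :=
  Matrix.of fun x y => ∫ ψ, tpow (outer ψ) N x y ∂D

lemma tpow_outer_apply (ψ : ι → ℂ) (x y : Fin N → ι) :
    tpow (outer ψ) N x y = (∏ i, ψ (x i)) * conj (∏ i, ψ (y i)) := by
  simp [tpow_apply, outer, Finset.prod_mul_distrib]

lemma outer_mulVec [Fintype ι] (A : Matrix ι ι ℂ) (ψ : ι → ℂ) :
    outer (A *ᵥ ψ) = A * outer ψ * Aᴴ := by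
  have outer_eq (φ : ι → ℂ) : outer φ = Matrix.vecMulVec φ (star φ) := rfl
  rw [outer_eq, outer_eq, Matrix.star_mulVec, Matrix.mul_vecMulVec, Matrix.vecMulVec_mul]

variable {D : Measure (ι → ℂ)}

lemma isHermitian_momentMatrix : (momentMatrix D N).IsHermitian := by
  ext x y
  simp only [momentMatrix, Matrix.conjTranspose_apply, Matrix.of_apply, tpow_outer_apply,
    Complex.star_def, ← integral_conj, map_mul, Complex.conj_conj, mul_comm]

lemma momentMatrix_comp_perm (π : Equiv.Perm (Fin N)) (x y : Fin N → ι) :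
    momentMatrix D N (x ∘ π) y = momentMatrix D N x y := by
  simp only [momentMatrix, Matrix.of_apply, tpow_outer_apply, Function.comp_apply,
    fun ψ : ι → ℂ => Equiv.prod_comp π fun i => ψ (x i)]

lemma integral_mul_mul_apply {Ω m n : Type*} [MeasurableSpace Ω] {μ : Measure Ω} [Fintype m]
    [Fintype n] {M : Ω → Matrix m n ℂ} (hM : ∀ x y, Integrable (fun ω => M ω x y) μ)
    (P : Matrix m m ℂ) (Q : Matrix n n ℂ) (x : m) (y : n) :
    ∫ ω, (P * M ω * Q) x y ∂μ = (P * Matrix.of (fun x y => ∫ ω, M ω x y ∂μ) * Q) x y := by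
  simp only [Matrix.mul_apply, Matrix.of_apply]
  rw [integral_finsetSum _ fun b _ =>
    (integrable_finsetSum _ fun a _ => (hM a b).const_mul _).mul_const _]
  refine Finset.sum_congr rfl fun b _ => ?_
  rw [integral_mul_const, integral_finsetSum _ fun a _ => (hM a b).const_mul _]
  simp only [integral_const_mul]

lemma continuous_tpow_outer_apply (x y : Fin N → ι) :
    Continuous fun ψ : ι → ℂ => tpow (outer ψ) N x y := by
  simp only [tpow_outer_apply]
  fun_prop

variable [Fintype ι]

lemma norm_apply_le_one_of_isUnitVec {ψ : ι → ℂ} (hψ : IsUnitVec ψ) (x : ι) : ‖ψ x‖ ≤ 1 := by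
  rw [← sq_le_one_iff₀ (norm_nonneg _), ← Complex.normSq_eq_norm_sq, ← hψ]
  exact Finset.single_le_sum (f := fun x => Complex.normSq (ψ x))
    (fun x _ => Complex.normSq_nonneg _) (Finset.mem_univ x)

lemma integrable_tpow_outer_apply [IsFiniteMeasure D] (hD : ∀ᵐ ψ ∂D, IsUnitVec ψ)
    (x y : Fin N → ι) : Integrable (fun ψ => tpow (outer ψ) N x y) D := by
  refine Integrable.of_bound (continuous_tpow_outer_apply x y).aestronglyMeasurable 1 ?_
  filter_upwards [hD] with ψ hψ
  have h_prod (z : Fin N → ι) : ‖∏ i, ψ (z i)‖ ≤ 1 := by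
    rw [norm_prod]
    exact Finset.prod_le_one (fun _ _ => norm_nonneg _)
      fun i _ => norm_apply_le_one_of_isUnitVec hψ (z i)
  rw [tpow_outer_apply, norm_mul, RCLike.norm_conj]
  exact mul_le_one₀ (h_prod x) (norm_nonneg _) (h_prod y)

lemma momentMatrix_eq_conj_of_map_eq (hD : ∀ x y, Integrable (fun ψ => tpow (outer ψ) N x y) D)
    {A : Matrix ι ι ℂ} (hA : D.map (A *ᵥ ·) = D) :
    momentMatrix D N = tpow A N * momentMatrix D N * (tpow A N)ᴴ := by
  ext x y
  calc momentMatrix D N x y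
      = ∫ ψ, tpow (outer ψ) N x y ∂D.map (A *ᵥ ·) := by rw [hA]; rfl
    _ = ∫ ψ, tpow (outer (A *ᵥ ψ)) N x y ∂D :=
        integral_map (by fun_prop) (continuous_tpow_outer_apply x y).aestronglyMeasurable
    _ = ∫ ψ, (tpow A N * tpow (outer ψ) N * (tpow A N)ᴴ) x y ∂D := by
        simp only [outer_mulVec, tpow_mul, tpow_conjTranspose]
    _ = (tpow A N * momentMatrix D N * (tpow A N)ᴴ) x y := integral_mul_mul_apply hD _ _ x y

lemma commute_momentMatrix_tpow [DecidableEq ι]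
    (hD : ∀ x y, Integrable (fun ψ => tpow (outer ψ) N x y) D)
    {A : Matrix ι ι ℂ} (hA_unitary : A ∈ Matrix.unitaryGroup ι ℂ) (hA : D.map (A *ᵥ ·) = D) :
    Commute (momentMatrix D N) (tpow A N) := by
  have h_unitary : (tpow A N)ᴴ * tpow A N = 1 := by
    rw [← tpow_conjTranspose, ← tpow_mul, ← Matrix.star_eq_conjTranspose,
      Matrix.mem_unitaryGroup_iff'.mp hA_unitary, tpow_one]
  calc momentMatrix D N * tpow A N
      = tpow A N * momentMatrix D N * (tpow A N)ᴴ * tpow A N := by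
        rw [← momentMatrix_eq_conj_of_map_eq hD hA]
    _ = tpow A N * momentMatrix D N := by rw [mul_assoc, h_unitary, mul_one]

end Moments

section DiscardB

variable {d N : ℕ}

lemma applyB_eq_kronecker_mulVec (U : Matrix (Fin d) (Fin d) ℂ) :
    applyB U = (((1 : Matrix (Fin d) (Fin d) ℂ) ⊗ₖ U) *ᵥ ·) := by
  ext ψ ⟨i, j⟩
  simp [applyB, Matrix.mulVec, dotProduct, Fintype.sum_prod_type, Matrix.one_apply]

lemma commute_momentMatrix_tpow_one_kronecker {D : Measure (Fin d × Fin d → ℂ)}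
    (hInt : ∀ x y, Integrable (fun ψ => tpow (outer ψ) N x y) D)
    {U : Matrix (Fin d) (Fin d) ℂ} (hU : U ∈ Matrix.unitaryGroup (Fin d) ℂ)
    (hInv : D.map (applyB U) = D) : Commute (momentMatrix D N) (tpow (1 ⊗ₖ U) N) :=
  commute_momentMatrix_tpow hInt (Matrix.kronecker_mem_unitary (one_mem _) hU)
    (applyB_eq_kronecker_mulVec U ▸ hInv)

lemma ptraceBn_eq_partialTrace (M : Matrix (Fin N → Fin d × Fin d) (Fin N → Fin d × Fin d) ℂ) :
    ptraceBn M =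
      partialTrace (M.submatrix (pairEquiv (Fin d) (Fin d) N) (pairEquiv (Fin d) (Fin d) N)) :=
  rfl

lemma isHermitian_ptraceBn {M : Matrix (Fin N → Fin d × Fin d) (Fin N → Fin d × Fin d) ℂ}
    (hM : M.IsHermitian) : (ptraceBn M).IsHermitian := by
  rw [ptraceBn_eq_partialTrace]
  exact isHermitian_partialTrace (hM.submatrix _)

lemma ptraceBn_sub (M M' : Matrix (Fin N → Fin d × Fin d) (Fin N → Fin d × Fin d) ℂ) :
    ptraceBn (M - M') = ptraceBn M - ptraceBn M' := by
  ext x y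
  simp [ptraceBn]

theorem traceNorm_ptraceBn_of_symmetric
    {Z : Matrix (Fin N → Fin d × Fin d) (Fin N → Fin d × Fin d) ℂ} (hZ : Z.IsHermitian)
    (h_perm : ∀ (π : Equiv.Perm (Fin N)) x y, Z (x ∘ π) y = Z x y)
    (h_comm : ∀ U ∈ Matrix.unitaryGroup (Fin d) ℂ, Commute Z (tpow (1 ⊗ₖ U) N)) :
    traceNorm (ptraceBn Z) = traceNorm Z := by
  let e := pairEquiv (Fin d) (Fin d) N
  let _ : MulAction (Equiv.Perm (Fin N)) (Fin N → Fin d) := arrowAction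
  have hleft : symmetrizer (Equiv.Perm (Fin N)) _ * Z.submatrix e e = Z.submatrix e e :=
    symmetrizer_mul_eq_self fun π => by
      ext p q
      rw [actionMatrix_mul_apply]
      exact h_perm π (e p) (e q)
  have hright : Z.submatrix e e * symmetrizer (Equiv.Perm (Fin N)) _ = Z.submatrix e e := by
    simpa [Matrix.conjTranspose_mul, isHermitian_symmetrizer.eq, hZ.eq] using
      congrArg Matrix.conjTranspose hleft
  have hcomm (U) (hU : U ∈ Matrix.unitaryGroup (Fin d) ℂ) :
      Commute (Z.submatrix e e) (1 ⊗ₖ tpow U N) := by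
    rw [← tpow_one, ← submatrix_pairEquiv_tpow_kronecker, Commute, SemiconjBy,
      Matrix.submatrix_mul_equiv, Matrix.submatrix_mul_equiv, (h_comm U hU).eq]
  rw [ptraceBn_eq_partialTrace, ← traceNorm_submatrix_equiv Z e]
  refine traceNorm_partialTrace_eq_of_symmetric hleft hright fun G hG => ?_
  refine commute_one_kronecker_of_perm_invariant hcomm fun π x y => ?_
  exact commute_actionMatrix_iff.mp (hG π⁻¹) x y

theorem stmt_4_general (d N : ℕ) (Dyes Dno : Measure (Fin d × Fin d → ℂ))
    (hyesInt : ∀ x y, Integrable (fun ψ => tpow (outer ψ) N x y) Dyes)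
    (hnoInt : ∀ x y, Integrable (fun ψ => tpow (outer ψ) N x y) Dno)
    (hyesInv : ∀ U ∈ Matrix.unitaryGroup (Fin d) ℂ, Dyes.map (applyB U) = Dyes)
    (hnoInv : ∀ U ∈ Matrix.unitaryGroup (Fin d) ℂ, Dno.map (applyB U) = Dno) :
    traceDist (momentMatrix Dyes N) (momentMatrix Dno N) =
      traceDist (ptraceBn (momentMatrix Dyes N)) (ptraceBn (momentMatrix Dno N)) := by
  have h_herm : (momentMatrix Dyes N - momentMatrix Dno N).IsHermitian :=
    isHermitian_momentMatrix.sub isHermitian_momentMatrix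
  rw [traceDist_eq_traceNorm_sub h_herm,
    traceDist_eq_traceNorm_sub (ptraceBn_sub _ _ ▸ isHermitian_ptraceBn h_herm), ← ptraceBn_sub,
    traceNorm_ptraceBn_of_symmetric h_herm]
  · intro π x y
    simp only [Matrix.sub_apply, momentMatrix_comp_perm]
  · exact fun U hU =>
      (commute_momentMatrix_tpow_one_kronecker hyesInt hU (hyesInv U hU)).sub_left
        (commute_momentMatrix_tpow_one_kronecker hnoInt hU (hnoInv U hU))

end DiscardB

/-- Corollary `corollary-4241439`: for ensembles that are unitarily invariant
on `H_B`, discarding the `B` part preserves the trace distance. -/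
theorem stmt_4 (d N : ℕ) (hd : 1 ≤ d) (hN : 1 ≤ N)
    (Dyes Dno : Measure (Fin d × Fin d → ℂ))
    (hPyes : IsProbabilityMeasure Dyes) (hPno : IsProbabilityMeasure Dno)
    (hyesUnit : ∀ᵐ ψ ∂Dyes, IsUnitVec ψ) (hnoUnit : ∀ᵐ ψ ∂Dno, IsUnitVec ψ)
    (hyesInv : ∀ U ∈ Matrix.unitaryGroup (Fin d) ℂ, Dyes.map (applyB U) = Dyes)
    (hnoInv : ∀ U ∈ Matrix.unitaryGroup (Fin d) ℂ, Dno.map (applyB U) = Dno)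
    (ρ σ : Matrix (Fin N → Fin d × Fin d) (Fin N → Fin d × Fin d) ℂ)
    (hρ : ∀ x y, ρ x y = ∫ ψ, tpow (outer ψ) N x y ∂Dyes)
    (hσ : ∀ x y, σ x y = ∫ ψ, tpow (outer ψ) N x y ∂Dno) :
    traceDist ρ σ = traceDist (ptraceBn ρ) (ptraceBn σ) := by
  obtain rfl : ρ = momentMatrix Dyes N := Matrix.ext hρ
  obtain rfl : σ = momentMatrix Dno N := Matrix.ext hσ
  exact stmt_4_general d N Dyes Dno (integrable_tpow_outer_apply hyesUnit)
    (integrable_tpow_outer_apply hnoUnit) hyesInv hnoInv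

end PaperStmt
end

section
/- Tester amplification (Lemma lemma-4181503): Let ι be a finite nonempty type and let P = (Pyes, Pno) be a pair of disjoint sets of density matrices on ι. Let 0 < s < c ≤ 1. If there exists a (c, (s + c)/2)-tester for P with sample complexity N ≥ 1, then there exists a (c, s)-tester for P with sample complexity n * N, where n = ⌈100 * Real.log (1/s + 10) * (c − s)⁻³⌉. -/
open scoped ComplexConjugate ComplexOrder Kronecker Matrix
open MeasureTheory

namespace PaperStmt

/-!
Run the given tester independently on `n` blocks of `N` samples and accept when the fraction of
accepting runs is at least `θ = c - ε`, where `2ε` is the gap of the given tester. If one run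
accepts `ρ` with probability `p`, the number of accepting runs is binomial with parameters `n` and
`p`. For `p ≤ c - 2ε` Hoeffding's inequality bounds the upper tail by `exp (-2nε²)`. For `p ≥ c`
Chebyshev's inequality bounds the rejection probability by `p (1 - p) / (nε²)`; keeping the factor
`1 - p` of the variance makes this at most `1 - p`, so that completeness is preserved exactly.
-/

open Finset

section PiKronecker

variable {η R : Type*} [Fintype η] {l m n : η → Type*}

/-- The tensor product of a finite family of matrices, with rows and columns indexed by dependent
functions as in `tpow`. -/
def piKronecker [CommMonoid R] (A : ∀ i, Matrix (l i) (m i) R) :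
    Matrix (∀ i, l i) (∀ i, m i) R :=
  Matrix.of fun x y => ∏ i, A i (x i) (y i)

lemma tpow_eq_piKronecker {ι : Type*} (ρ : Matrix ι ι ℂ) (N : ℕ) :
    tpow ρ N = piKronecker fun _ : Fin N => ρ := rfl

lemma piKronecker_mul [DecidableEq η] [CommSemiring R] [∀ i, Fintype (m i)]
    (A : ∀ i, Matrix (l i) (m i) R) (B : ∀ i, Matrix (m i) (n i) R) :
    piKronecker (fun i => A i * B i) = piKronecker A * piKronecker B := by
  ext x y
  simp only [piKronecker, Matrix.of_apply, Matrix.mul_apply, Fintype.prod_sum, prod_mul_distrib]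

lemma trace_piKronecker [DecidableEq η] [CommSemiring R] [∀ i, Fintype (m i)]
    (A : ∀ i, Matrix (m i) (m i) R) : (piKronecker A).trace = ∏ i, (A i).trace := by
  simp only [piKronecker, Matrix.trace, Matrix.diag, Matrix.of_apply, Fintype.prod_sum]

lemma conjTranspose_piKronecker [CommSemiring R] [StarRing R] (A : ∀ i, Matrix (l i) (m i) R) :
    (piKronecker A)ᴴ = piKronecker fun i => (A i)ᴴ := by
  ext x y
  simp only [piKronecker, Matrix.conjTranspose_apply, Matrix.of_apply, star_prod]

lemma piKronecker_one [CommSemiring R] [∀ i, DecidableEq (m i)] :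
    piKronecker (fun i => (1 : Matrix (m i) (m i) R)) = 1 := by
  ext x y
  simp [piKronecker, Matrix.one_apply, prod_ite_zero, funext_iff]

lemma piKronecker_add [DecidableEq η] [CommSemiring R] (A B : ∀ i, Matrix (l i) (m i) R) :
    piKronecker (fun i => A i + B i) = ∑ S : Finset η, piKronecker (S.piecewise A B) := by
  ext x y
  simp only [piKronecker, Matrix.sum_apply, Matrix.of_apply, Matrix.add_apply, Fintype.prod_add]
  refine sum_congr rfl fun S _ => ?_
  rw [← prod_mul_prod_compl S]
  congr 1 <;> refine prod_congr rfl fun i hi => ?_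
  · rw [piecewise_eq_of_mem _ _ _ hi]
  · rw [piecewise_eq_of_notMem _ _ _ (mem_compl.mp hi)]

end PiKronecker

section PosSemidef

variable {𝕜 κ : Type*} [RCLike 𝕜] [Fintype κ]

lemma exists_eq_conjTranspose_mul_self {A : Matrix κ κ 𝕜} (hA : A.PosSemidef) :
    ∃ B : Matrix κ κ 𝕜, A = Bᴴ * B := by
  classical
  open scoped MatrixOrder Matrix.Norms.L2Operator in
  exact CStarAlgebra.nonneg_iff_eq_star_mul_self.mp hA.nonneg

lemma posSemidef_piKronecker {η : Type*} [Fintype η] {m : η → Type*} [∀ i, Finite (m i)]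
    {A : ∀ i, Matrix (m i) (m i) 𝕜} (hA : ∀ i, (A i).PosSemidef) :
    (piKronecker A).PosSemidef := by
  classical
  have (i : η) := Fintype.ofFinite (m i)
  choose B hB using fun i => exists_eq_conjTranspose_mul_self (hA i)
  rw [funext hB, piKronecker_mul, ← conjTranspose_piKronecker]
  exact Matrix.posSemidef_conjTranspose_mul_self _

lemma trace_mul_nonneg {A B : Matrix κ κ 𝕜} (hA : A.PosSemidef) (hB : B.PosSemidef) :
    0 ≤ (A * B).trace := by
  obtain ⟨C, rfl⟩ := exists_eq_conjTranspose_mul_self hB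
  rw [← Matrix.mul_assoc, Matrix.trace_mul_comm, ← Matrix.mul_assoc]
  exact (hA.mul_mul_conjTranspose_same C).trace_nonneg

end PosSemidef

section BinomialTail

/-- The numbers of successes in `n` trials that meet the threshold `n * θ`. -/
noncomputable def upperTail (n : ℕ) (θ : ℝ) : Finset (Fin (n + 1)) := {k | n * θ ≤ (k : ℝ)}

lemma mem_upperTail {n : ℕ} {θ : ℝ} {k : Fin (n + 1)} : k ∈ upperTail n θ ↔ n * θ ≤ (k : ℝ) := by
  simp [upperTail]

/-- The probability that `n` independent trials, each succeeding with probability `x`, yield at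
least `n * θ` successes. -/
noncomputable def binomialTail (n : ℕ) (θ : ℝ) (x : unitInterval) : ℝ :=
  ∑ k ∈ upperTail n θ, bernstein n k x

lemma binomialTail_antitone (n : ℕ) (x : unitInterval) :
    Antitone fun θ => binomialTail n θ x := by
  intro θ θ' hθ
  refine sum_le_sum_of_subset_of_nonneg (fun k hk => ?_) fun _ _ _ => bernstein_nonneg
  rw [mem_upperTail] at hk ⊢
  exact (mul_le_mul_of_nonneg_left hθ n.cast_nonneg).trans hk

lemma one_sub_le_binomialTail {n : ℕ} (hn : n ≠ 0) (x : unitInterval) {ε : ℝ} (hε : 0 < ε) :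
    1 - (x : ℝ) * (1 - x) / (n * ε ^ 2) ≤ binomialTail n (x - ε) x := by
  have hn' : (0 : ℝ) < n := by positivity
  have far {k : Fin (n + 1)} (hk : k ∈ (upperTail n (x - ε))ᶜ) : ε ≤ x - bernstein.z k := by
    rw [mem_compl, mem_upperTail, not_le] at hk
    rw [le_sub_comm, bernstein.z, div_le_iff₀ hn', mul_comm]
    exact hk.le
  have lower_tail_le : ∑ k ∈ (upperTail n (x - ε))ᶜ, bernstein n k x
      ≤ (x : ℝ) * (1 - x) / (n * ε ^ 2) := by
    calc ∑ k ∈ (upperTail n (x - ε))ᶜ, bernstein n k x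
        ≤ ∑ k ∈ (upperTail n (x - ε))ᶜ,
            (x - bernstein.z k : ℝ) ^ 2 * bernstein n k x / ε ^ 2 := by
          refine sum_le_sum fun k hk => ?_
          rw [le_div_iff₀ (by positivity), mul_comm]
          gcongr
          exact far hk
      _ ≤ ∑ k, (x - bernstein.z k : ℝ) ^ 2 * bernstein n k x / ε ^ 2 :=
          sum_le_univ_sum_of_nonneg fun _ => by positivity
      _ = (x : ℝ) * (1 - x) / (n * ε ^ 2) := by
          rw [← sum_div, bernstein.variance hn, div_div]
  have total : binomialTail n (x - ε) x + ∑ k ∈ (upperTail n (x - ε))ᶜ, bernstein n k x = 1 :=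
    (sum_add_sum_compl _ _).trans (bernstein.probability n x)
  linarith

lemma le_binomialTail {n : ℕ} {x : unitInterval} {c ε : ℝ} (hε : 0 < ε) (hn : 1 ≤ n * ε ^ 2)
    (hcx : c ≤ x) : c ≤ binomialTail n (c - ε) x := by
  have hn0 : n ≠ 0 := by
    rintro rfl
    norm_num at hn
  have hx : (x : ℝ) * (1 - x) / (n * ε ^ 2) ≤ 1 - x := by
    rw [div_le_iff₀ (by positivity), mul_comm]
    exact mul_le_mul_of_nonneg_left (x.2.2.trans hn) (sub_nonneg.mpr x.2.2)
  calc c ≤ 1 - (x : ℝ) * (1 - x) / (n * ε ^ 2) := by linarith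
    _ ≤ binomialTail n (x - ε) x := one_sub_le_binomialTail hn0 x hε
    _ ≤ binomialTail n (c - ε) x := binomialTail_antitone n x (by linarith)

lemma sum_exp_mul_bernstein (n : ℕ) (x : unitInterval) (t : ℝ) :
    ∑ k : Fin (n + 1), Real.exp (t * k) * bernstein n k x = (x * Real.exp t + (1 - x)) ^ n := by
  rw [add_pow, Finset.sum_range]
  refine sum_congr rfl fun k _ => ?_
  rw [bernstein_apply, mul_comm t, Real.exp_nat_mul]
  ring

open ProbabilityTheory in
lemma bernoulli_mgf_le (x : unitInterval) (t : ℝ) :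
    x * Real.exp t + (1 - x) ≤ Real.exp (x * t + t ^ 2 / 8) := by
  let μ : Measure ℝ := bernoulliMeasure 1 0 x
  have range : ∀ᵐ y ∂μ, id y ∈ Set.Icc (0 : ℝ) 1 :=
    mem_ae_iff.mpr <|
      bernoulliMeasure_apply_of_notMem_of_notMem x measurableSet_Icc.compl (by simp) (by simp)
  have mean : ∫ y, y ∂μ = x := by simp [μ, integral_bernoulliMeasure]
  have mgf_eq : mgf (fun y => y - x) μ t = Real.exp (-(x * t)) * (x * Real.exp t + (1 - x)) := by
    rw [mgf, integral_bernoulliMeasure, smul_eq_mul, smul_eq_mul, mul_sub, mul_sub, Real.exp_sub,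
      Real.exp_sub, mul_comm t x, Real.exp_neg, mul_one, mul_zero, Real.exp_zero]
    ring
  have hoeffding : mgf (fun y => y - x) μ t ≤ Real.exp (t ^ 2 / 8) := by
    have h := (hasSubgaussianMGF_of_mem_Icc aemeasurable_id range).mgf_le t
    simp only [id, mean] at h
    refine h.trans_eq (congrArg Real.exp ?_)
    norm_num
    ring
  rw [mgf_eq, Real.exp_neg, inv_mul_le_iff₀ (Real.exp_pos _), ← Real.exp_add] at hoeffding
  exact hoeffding

lemma binomialTail_le_exp (n : ℕ) (x : unitInterval) {ε : ℝ} (hε : 0 ≤ ε) :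
    binomialTail n (x + ε) x ≤ Real.exp (-(2 * n * ε ^ 2)) := by
  -- `t = 4ε` minimises the Chernoff exponent `t ^ 2 / 8 - t * ε`.
  let t := 4 * ε
  have hx0 : (0 : ℝ) ≤ x := x.2.1
  have hx1 : (0 : ℝ) ≤ 1 - x := sub_nonneg.mpr x.2.2
  calc binomialTail n (x + ε) x
      ≤ ∑ k ∈ upperTail n (x + ε),
          Real.exp (-(t * (n * (x + ε)))) * (Real.exp (t * k) * bernstein n k x) := by
        refine sum_le_sum fun k hk => ?_
        rw [← mul_assoc, ← Real.exp_add, neg_add_eq_sub, ← mul_sub]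
        refine le_mul_of_one_le_left bernstein_nonneg (Real.one_le_exp ?_)
        exact mul_nonneg (by positivity) (sub_nonneg.mpr (mem_upperTail.mp hk))
    _ ≤ ∑ k : Fin (n + 1),
          Real.exp (-(t * (n * (x + ε)))) * (Real.exp (t * k) * bernstein n k x) :=
        sum_le_univ_sum_of_nonneg fun _ => by positivity
    _ = Real.exp (-(t * (n * (x + ε)))) * (x * Real.exp t + (1 - x)) ^ n := by
        rw [← mul_sum, sum_exp_mul_bernstein]
    _ ≤ Real.exp (-(t * (n * (x + ε)))) * Real.exp (x * t + t ^ 2 / 8) ^ n := by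
        gcongr
        exact bernoulli_mgf_le x t
    _ = Real.exp (-(2 * n * ε ^ 2)) := by
        rw [← Real.exp_nat_mul, ← Real.exp_add]
        congr 1
        ring

end BinomialTail

section AcceptingSetEffect

variable {η κ : Type*} [Fintype η] [DecidableEq η] [DecidableEq κ]

/-- When `T` is applied independently to registers indexed by `η`, the measurement effect of the
event that the accepting registers are exactly those in `S`. -/
noncomputable def acceptingSetEffect (T : Matrix κ κ ℂ) (S : Finset η) :
    Matrix (η → κ) (η → κ) ℂ :=
  piKronecker (S.piecewise (fun _ => T) fun _ => 1 - T)

lemma sum_acceptingSetEffect (T : Matrix κ κ ℂ) :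
    ∑ S : Finset η, acceptingSetEffect T S = 1 := by
  simp only [acceptingSetEffect, ← piKronecker_add, add_sub_cancel, piKronecker_one]

variable [Fintype κ]

lemma posSemidef_acceptingSetEffect {T : Matrix κ κ ℂ} (hT : IsTester T) (S : Finset η) :
    (acceptingSetEffect T S).PosSemidef := by
  refine posSemidef_piKronecker fun i => ?_
  by_cases hi : i ∈ S
  · rw [piecewise_eq_of_mem _ _ _ hi]
    exact hT.1
  · rw [piecewise_eq_of_notMem _ _ _ hi]
    exact hT.2

lemma trace_acceptingSetEffect_mul (T : Matrix κ κ ℂ) {σ : Matrix κ κ ℂ} (hσ : σ.trace = 1)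
    (S : Finset η) :
    (acceptingSetEffect T S * piKronecker fun _ => σ).trace
      = (T * σ).trace ^ #S * (1 - (T * σ).trace) ^ #Sᶜ := by
  rw [acceptingSetEffect, ← piKronecker_mul, trace_piKronecker, ← prod_mul_prod_compl S]
  congr 1 <;> refine prod_eq_pow_card fun i hi => ?_
  · rw [piecewise_eq_of_mem _ _ _ hi]
  · rw [piecewise_eq_of_notMem _ _ _ (mem_compl.mp hi), Matrix.sub_mul, Matrix.one_mul,
      Matrix.trace_sub, hσ]

end AcceptingSetEffect

section Tester

variable {κ : Type*} [Fintype κ] [DecidableEq κ]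

lemma isTester_sum_of_sum_eq_one {α : Type*} [Fintype α] {E : α → Matrix κ κ ℂ}
    (hE : ∀ a, (E a).PosSemidef) (hsum : ∑ a, E a = 1) (s : Finset α) :
    IsTester (∑ a ∈ s, E a) := by
  classical
  refine ⟨Matrix.posSemidef_sum _ fun a _ => hE a, ?_⟩
  rw [← hsum, ← sum_compl_add_sum s, add_sub_cancel_right]
  exact Matrix.posSemidef_sum _ fun a _ => hE a

lemma IsTester.submatrix_equiv {κ' : Type*} [Fintype κ'] [DecidableEq κ'] {T : Matrix κ κ ℂ}
    (hT : IsTester T) (e : κ' ≃ κ) : IsTester (T.submatrix e e) := by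
  refine ⟨hT.1.submatrix e, ?_⟩
  rw [← Matrix.submatrix_one_equiv e]
  exact hT.2.submatrix e

/-- The tester that applies `T` independently to `n` registers and accepts when at least `n * θ` of
the runs accept. -/
noncomputable def thresholdTester (n : ℕ) (θ : ℝ) (T : Matrix κ κ ℂ) :
    Matrix (Fin n → κ) (Fin n → κ) ℂ :=
  ∑ S : Finset (Fin n) with n * θ ≤ #S, acceptingSetEffect T S

lemma isTester_thresholdTester (n : ℕ) (θ : ℝ) {T : Matrix κ κ ℂ} (hT : IsTester T) :
    IsTester (thresholdTester n θ T) :=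
  isTester_sum_of_sum_eq_one (posSemidef_acceptingSetEffect hT) (sum_acceptingSetEffect T) _

lemma trace_thresholdTester_mul (n : ℕ) (θ : ℝ) {T σ : Matrix κ κ ℂ} (hσ : σ.trace = 1)
    {p : unitInterval} (hp : (T * σ).trace = (p : ℝ)) :
    (thresholdTester n θ T * piKronecker fun _ => σ).trace = (binomialTail n θ p : ℂ) := by
  let tailTerm (k : ℕ) : ℝ := if n * θ ≤ k then (p : ℝ) ^ k * (1 - p) ^ (n - k) else 0
  have sum_eq_tail : ∑ S : Finset (Fin n), tailTerm #S = binomialTail n θ p := by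
    rw [← powerset_univ, sum_powerset_apply_card, card_univ, Fintype.card_fin, binomialTail,
      upperTail, sum_filter, Finset.sum_range]
    refine sum_congr rfl fun k _ => ?_
    simp only [tailTerm, bernstein_apply, nsmul_eq_mul, mul_ite, mul_zero, mul_assoc]
  rw [← sum_eq_tail, thresholdTester, sum_mul, Matrix.trace_sum, sum_filter, Complex.ofReal_sum]
  refine sum_congr rfl fun S _ => ?_
  rw [trace_acceptingSetEffect_mul T hσ, hp, card_compl, Fintype.card_fin]
  simp only [tailTerm]
  split_ifs <;> push_cast <;> rfl

end Tester

section Amplification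

lemma trace_submatrix_equiv {κ κ' R : Type*} [Fintype κ] [Fintype κ'] [AddCommMonoid R]
    (A : Matrix κ κ R) (e : κ' ≃ κ) : (A.submatrix e e).trace = A.trace :=
  e.sum_comp A.diag

variable {ι : Type*}

/-- The splitting of `n * N` registers into `n` blocks of `N` registers. -/
def blockEquiv (ι : Type*) (n N : ℕ) : (Fin (n * N) → ι) ≃ (Fin n → Fin N → ι) :=
  (Equiv.arrowCongr finProdFinEquiv.symm (Equiv.refl ι)).trans (Equiv.curry _ _ _)

lemma tpow_mul_s11 (ρ : Matrix ι ι ℂ) (n N : ℕ) :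
    tpow ρ (n * N) = (piKronecker fun _ : Fin n => tpow ρ N).submatrix
      (blockEquiv ι n N) (blockEquiv ι n N) := by
  ext x y
  simp only [tpow, piKronecker, Matrix.of_apply, Matrix.submatrix_apply]
  rw [← Fintype.prod_prod_type', ← finProdFinEquiv.prod_comp]
  rfl

variable [Fintype ι]

lemma acc_submatrix_blockEquiv {n N : ℕ}
    (A : Matrix (Fin n → Fin N → ι) (Fin n → Fin N → ι) ℂ) (ρ : Matrix ι ι ℂ) :
    acc (A.submatrix (blockEquiv ι n N) (blockEquiv ι n N)) ρ
      = (A * piKronecker fun _ => tpow ρ N).trace.re := by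
  rw [acc, tpow_mul_s11, Matrix.submatrix_mul_equiv, trace_submatrix_equiv]

namespace IsDensity

lemma posSemidef_tpow {ρ : Matrix ι ι ℂ} (hρ : IsDensity ρ) (N : ℕ) : (tpow ρ N).PosSemidef :=
  posSemidef_piKronecker fun _ => hρ.1

lemma trace_tpow {ρ : Matrix ι ι ℂ} (hρ : IsDensity ρ) (N : ℕ) : (tpow ρ N).trace = 1 := by
  simp only [tpow_eq_piKronecker, trace_piKronecker, hρ.2, prod_const_one]

end IsDensity

variable [DecidableEq ι] {N : ℕ} {T : Matrix (Fin N → ι) (Fin N → ι) ℂ} {ρ : Matrix ι ι ℂ}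

namespace IsTester

lemma trace_mul_tpow (hT : IsTester T) (hρ : IsDensity ρ) : (T * tpow ρ N).trace = acc T ρ :=
  Complex.eq_re_of_ofReal_le (r := 0) (trace_mul_nonneg hT.1 (hρ.posSemidef_tpow N))

lemma acc_mem_unitInterval (hT : IsTester T) (hρ : IsDensity ρ) : acc T ρ ∈ unitInterval := by
  have accept_nonneg := trace_mul_nonneg hT.1 (hρ.posSemidef_tpow N)
  have reject_nonneg := trace_mul_nonneg hT.2 (hρ.posSemidef_tpow N)
  rw [Matrix.sub_mul, Matrix.one_mul, Matrix.trace_sub, hρ.trace_tpow, hT.trace_mul_tpow hρ]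
    at reject_nonneg
  rw [hT.trace_mul_tpow hρ] at accept_nonneg
  exact ⟨by exact_mod_cast accept_nonneg, by exact_mod_cast sub_nonneg.mp reject_nonneg⟩

end IsTester

/-- The tester that runs `T` on `n` disjoint blocks of `N` samples each and accepts when at least
`n * θ` of the runs accept. -/
noncomputable def amplifiedTester (n : ℕ) (θ : ℝ) (T : Matrix (Fin N → ι) (Fin N → ι) ℂ) :
    Matrix (Fin (n * N) → ι) (Fin (n * N) → ι) ℂ :=
  (thresholdTester n θ T).submatrix (blockEquiv ι n N) (blockEquiv ι n N)

lemma isTester_amplifiedTester (n : ℕ) (θ : ℝ) (hT : IsTester T) :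
    IsTester (amplifiedTester n θ T) :=
  (isTester_thresholdTester n θ hT).submatrix_equiv _

lemma acc_amplifiedTester (n : ℕ) (θ : ℝ) (hT : IsTester T) (hρ : IsDensity ρ) :
    acc (amplifiedTester n θ T) ρ
      = binomialTail n θ ⟨acc T ρ, hT.acc_mem_unitInterval hρ⟩ := by
  rw [amplifiedTester, acc_submatrix_blockEquiv,
    trace_thresholdTester_mul n θ (hρ.trace_tpow N)
      (p := ⟨acc T ρ, hT.acc_mem_unitInterval hρ⟩) (hT.trace_mul_tpow hρ),
    Complex.ofReal_re]

end Amplification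

lemma one_le_log_one_div_add_ten {s : ℝ} (hs : 0 < s) : 1 ≤ Real.log (1 / s + 10) := by
  rw [Real.le_log_iff_exp_le (by positivity)]
  have : 0 < 1 / s := by positivity
  linarith [Real.exp_one_lt_three]

lemma exp_neg_le_of_log_one_div_add_ten_le {s x : ℝ} (hs : 0 < s)
    (hx : Real.log (1 / s + 10) ≤ x) : Real.exp (-x) ≤ s := by
  rw [Real.log_le_iff_le_exp (by positivity)] at hx
  rw [Real.exp_neg]
  exact inv_le_of_inv_le₀ hs (by rw [← one_div]; linarith)

lemma le_ceil_mul_sq {a d : ℝ} (ha : 0 ≤ a) (hd0 : 0 < d) (hd1 : d ≤ 1) :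
    a ≤ ⌈a * d⁻¹ ^ 3⌉₊ * d ^ 2 := by
  calc a ≤ a * d⁻¹ := le_mul_of_one_le_right ha (one_le_inv₀ hd0 |>.mpr hd1)
    _ = a * d⁻¹ ^ 3 * d ^ 2 := by field_simp
    _ ≤ ⌈a * d⁻¹ ^ 3⌉₊ * d ^ 2 := by gcongr; exact Nat.le_ceil _

theorem stmt_11_general {ι : Type*} [Fintype ι] [DecidableEq ι] {Pyes Pno : Set (Matrix ι ι ℂ)}
    (hdens : ∀ ρ ∈ Pyes ∪ Pno, IsDensity ρ) {c s : ℝ} (hsc : s < c) {n N : ℕ}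
    (hn : 4 ≤ n * (c - s) ^ 2)
    (h : ∃ T : Matrix (Fin N → ι) (Fin N → ι) ℂ,
      IsTester T ∧ (∀ ρ ∈ Pyes, c ≤ acc T ρ) ∧ (∀ ρ ∈ Pno, acc T ρ ≤ s)) :
    ∃ T' : Matrix (Fin (n * N) → ι) (Fin (n * N) → ι) ℂ,
      IsTester T' ∧ (∀ ρ ∈ Pyes, c ≤ acc T' ρ) ∧
        (∀ ρ ∈ Pno, acc T' ρ ≤ Real.exp (-(n * (c - s) ^ 2 / 2))) := by
  obtain ⟨T, hT, hyes, hno⟩ := h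
  let ε := (c - s) / 2
  have hε : 0 < ε := half_pos (sub_pos.mpr hsc)
  have hnε : n * ε ^ 2 = n * (c - s) ^ 2 / 4 := by ring
  refine ⟨amplifiedTester n (c - ε) T, isTester_amplifiedTester n _ hT, fun ρ hρ => ?_,
    fun ρ hρ => ?_⟩
  · rw [acc_amplifiedTester n _ hT (hdens ρ (.inl hρ))]
    exact le_binomialTail hε (by linarith) (hyes ρ hρ)
  · let p : unitInterval := ⟨acc T ρ, hT.acc_mem_unitInterval (hdens ρ (.inr hρ))⟩
    have hp : p + ε ≤ c - ε := by
      calc p + ε ≤ s + ε := by gcongr; exact hno ρ hρ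
        _ = c - ε := by ring
    calc acc (amplifiedTester n (c - ε) T) ρ
        = binomialTail n (c - ε) p := acc_amplifiedTester n _ hT (hdens ρ (.inr hρ))
      _ ≤ binomialTail n (p + ε) p := binomialTail_antitone n p hp
      _ ≤ Real.exp (-(2 * n * ε ^ 2)) := binomialTail_le_exp n p hε.le
      _ = Real.exp (-(n * (c - s) ^ 2 / 2)) := by congr 1; linarith

/-- Lemma `lemma-4181503`, tester amplification. -/
theorem stmt_11 (ι : Type*) [Fintype ι] [DecidableEq ι] [Nonempty ι]
    (Pyes Pno : Set (Matrix ι ι ℂ))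
    (hdens : ∀ ρ ∈ Pyes ∪ Pno, IsDensity ρ)
    (hdisj : Disjoint Pyes Pno)
    (c s : ℝ) (hs0 : 0 < s) (hsc : s < c) (hc1 : c ≤ 1)
    (N : ℕ) (hN : 1 ≤ N)
    (h : ∃ T : Matrix (Fin N → ι) (Fin N → ι) ℂ,
      IsTester T ∧ (∀ ρ ∈ Pyes, c ≤ acc T ρ) ∧ (∀ ρ ∈ Pno, acc T ρ ≤ (s + c) / 2)) :
    ∃ T' : Matrix (Fin (⌈100 * Real.log (1 / s + 10) * ((c - s)⁻¹) ^ 3⌉₊ * N) → ι)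
        (Fin (⌈100 * Real.log (1 / s + 10) * ((c - s)⁻¹) ^ 3⌉₊ * N) → ι) ℂ,
      IsTester T' ∧ (∀ ρ ∈ Pyes, c ≤ acc T' ρ) ∧ (∀ ρ ∈ Pno, acc T' ρ ≤ s) := by
  have hlog := one_le_log_one_div_add_ten hs0
  have hn := le_ceil_mul_sq (a := 100 * Real.log (1 / s + 10)) (by positivity)
    (sub_pos.mpr hsc) (by linarith)
  generalize ⌈100 * Real.log (1 / s + 10) * ((c - s)⁻¹) ^ 3⌉₊ = n at hn ⊢
  obtain ⟨T', hT', hyes, hno⟩ := stmt_11_general hdens (n := n) (by linarith) (by linarith) h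
  exact ⟨T', hT', hyes, fun ρ hρ =>
    (hno ρ hρ).trans (exp_neg_le_of_log_one_div_add_ten_le hs0 (by linarith))⟩

end PaperStmt
end
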